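/- The following q-identity of fermionic type holds: ((-q^{1/2}t; q)_∞ (-q^{1/2}t^{-1}; q)_∞ (q;q)_∞²) / ((qt;q)_∞ (qt^{-1};q)_∞ (-q^{1/2};q)_∞²) = 1 + (t^{1/2} - t^{-1/2}) · Σ_{r=0}^∞ [ (-1)^r (q^{r+1}t)^{1/2}/(1 - q^{r+1}t) - (-1)^r (q^{r+1}t^{-1})^{1/2}/(1 - q^{r+1}t^{-1}) ]. -/

import Mathlib

/-- The `q`-Pochhammer symbol `(a;q)_∞ = ∏_{r≥0} (1 - a q^r)`. -/
noncomputable def qpoch (a q : ℂ) : ℂ := ∏' r : ℕ, (1 - a * q ^ r)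

/-!
Lagrange interpolation of `∏_{r<M} (x - b q^r)` at the nodes `1, q, …, q^M` has explicit
coefficients `b^j (a;q)_j (b;q)_{M-j} / ((q;q)_j (q;q)_{M-j})` as soon as `ab = q`. Taking `M = 2N`
and `x = q^N t`, and dividing by the product of the `x - q^i` over `i ≠ N`, gives a finite form of
Kronecker's identity, in which the nodes `j = N ∓ r` contribute the terms in `a^r` and `b^r`. The
limit `N → ∞`, taken by dominated convergence, is Kronecker's identity itself, and the theorem is
its symmetric case `a = b = -q^{1/2}`.
-/

open Finset Filter Topology

section BigOperators

lemma prod_range_erase {M : Type*} [CommMonoid M] (f : ℕ → M) (j m : ℕ) :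
    ∏ i ∈ (range (j + m + 1)).erase j, f i =
      (∏ i ∈ range j, f i) * ∏ i ∈ range m, f (j + 1 + i) := by
  induction m with
  | zero => simp [range_add_one]
  | succ m ih =>
    rw [range_add_one, erase_insert_of_ne (by omega), prod_insert (by simp), ← add_assoc, ih,
      prod_range_succ _ m, add_right_comm j m, mul_left_comm, mul_comm (f _)]

lemma sum_range_add_self_add_one {M : Type*} [AddCommMonoid M] (f : ℕ → M) (N : ℕ) :
    ∑ j ∈ range (N + N + 1), f j =
      f N + ∑ k ∈ range N, (f (N - (k + 1)) + f (N + (k + 1))) := by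
  rw [add_assoc, sum_range_add, sum_range_succ', ← sum_range_reflect, sum_add_distrib,
    add_zero, ← add_assoc, add_comm]
  simp only [Nat.sub_sub, add_comm 1]

lemma prod_erase_div_prod_erase {ι K : Type*} [DecidableEq ι] [Field K] {s : Finset ι}
    {f : ι → K} {i j : ι} (hi : i ∈ s) (hj : j ∈ s) (hij : i ≠ j) (hf : ∀ k ∈ s.erase i, f k ≠ 0) :
    (∏ k ∈ s.erase j, f k) / ∏ k ∈ s.erase i, f k = f i / f j := by
  have hfj : f j ≠ 0 := hf j (mem_erase.2 ⟨hij.symm, hj⟩)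
  rw [div_eq_div_iff (prod_ne_zero_iff.2 hf) hfj, prod_erase_mul s f hj, mul_prod_erase s f hi]

end BigOperators

section FiniteProducts

variable {K : Type*} [Field K] {a b q t : K}

/-- The finite `q`-Pochhammer symbol `(a;q)_n = ∏_{r<n} (1 - a q^r)`. -/
def qPochhammer (a q : K) (n : ℕ) : K := ∏ r ∈ range n, (1 - a * q ^ r)

/-- The coefficient `(a;q)_n / (q;q)_n` of `z^n` in the `q`-binomial series
`(az;q)_∞ / (z;q)_∞`. -/
def qBinomialCoeff (a q : K) (n : ℕ) : K := qPochhammer a q n / qPochhammer q q n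

lemma prod_range_sub_mul_pow (x a q : K) (n : ℕ) :
    ∏ r ∈ range n, (x - x * a * q ^ r) = x ^ n * qPochhammer a q n := by
  simpa [qPochhammer, mul_sub, mul_assoc] using
    (pow_card_mul_prod (s := range n) (f := fun r => 1 - a * q ^ r) (b := x)).symm

lemma prod_range_pow_mul_sub (hab : a * b = q) (t : K) (n : ℕ) :
    ∏ r ∈ range n, (q ^ n * t - b * q ^ r) =
      (-b) ^ n * q ^ n.choose 2 * qPochhammer (a * t) q n := by
  induction n with
  | zero => simp [qPochhammer]
  | succ n ih =>
    have shift : ∏ r ∈ range n, (q ^ (n + 1) * t - b * q ^ (r + 1)) =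
        q ^ n * ∏ r ∈ range n, (q ^ n * t - b * q ^ r) := by
      have := pow_card_mul_prod (s := range n) (f := fun r => q ^ n * t - b * q ^ r) (b := q)
      rw [card_range] at this
      rw [this]
      exact prod_congr rfl fun r _ => by ring
    have choose_two : (n + 1).choose 2 = n + n.choose 2 := by simp [Nat.choose_succ_succ']
    rw [prod_range_succ', shift, ih, choose_two, qPochhammer, qPochhammer, prod_range_succ]
    subst hab
    ring

lemma prod_sub_div_prod_erase_sub (hq : q ≠ 0) (ht : t ≠ 0) (hab : a * b = q) (j m : ℕ) :
    (∏ r ∈ range (j + m), (q ^ j * t - b * q ^ r)) /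
        ∏ i ∈ (range (j + m + 1)).erase j, (q ^ j * t - q ^ i) =
      b ^ j * (qPochhammer (a * t) q j * qPochhammer (b * t⁻¹) q m /
        (qPochhammer (q * t) q j * qPochhammer (q * t⁻¹) q m)) := by
  have upper (c : K) : ∏ r ∈ range m, (q ^ j * t - c * q ^ (j + r)) =
      (q ^ j * t) ^ m * qPochhammer (c * t⁻¹) q m := by
    rw [← prod_range_sub_mul_pow]
    exact prod_congr rfl fun r _ => by field_simp; ring
  have numerator : ∏ r ∈ range (j + m), (q ^ j * t - b * q ^ r) =
      (-1) ^ j * q ^ j.choose 2 * (q ^ j * t) ^ m *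
        (b ^ j * (qPochhammer (a * t) q j * qPochhammer (b * t⁻¹) q m)) := by
    rw [prod_range_add, prod_range_pow_mul_sub hab, upper, neg_pow]
    ring
  have denominator : ∏ i ∈ (range (j + m + 1)).erase j, (q ^ j * t - q ^ i) =
      (-1) ^ j * q ^ j.choose 2 * (q ^ j * t) ^ m *
        (qPochhammer (q * t) q j * qPochhammer (q * t⁻¹) q m) := by
    have below := prod_range_pow_mul_sub (mul_one q) t j
    have above : ∏ i ∈ range m, (q ^ j * t - q ^ (j + 1 + i)) =
        (q ^ j * t) ^ m * qPochhammer (q * t⁻¹) q m := by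
      rw [← upper]
      exact prod_congr rfl fun i _ => by ring
    simp only [one_mul] at below
    rw [prod_range_erase, below, above]
    ring
  rw [numerator, denominator, mul_div_mul_left _ _ (by simp [hq, ht]), mul_div_assoc]

lemma ne_zero_of_pow_injective (hq : Function.Injective (q ^ · : ℕ → K)) : q ≠ 0 := by
  rintro rfl
  exact absurd (@hq 1 2 (by simp)) (by norm_num)

lemma prod_range_sub_mul_pow_eq_sum (hq : Function.Injective (q ^ · : ℕ → K)) (hab : a * b = q)
    (M : ℕ) (x : K) :
    ∏ r ∈ range M, (x - b * q ^ r) = ∑ j ∈ range (M + 1),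
      b ^ j * (qBinomialCoeff a q j * qBinomialCoeff b q (M - j)) *
        ∏ i ∈ (range (M + 1)).erase j, (x - q ^ i) := by
  have hq0 := ne_zero_of_pow_injective hq
  let f : Polynomial K := ∏ r ∈ range M, (Polynomial.X - Polynomial.C (b * q ^ r))
  have eval_f (y : K) : f.eval y = ∏ r ∈ range M, (y - b * q ^ r) := by
    simp [f, Polynomial.eval_prod]
  have degree_f : f.degree < #(range (M + 1)) := by
    refine Polynomial.degree_le_natDegree.trans_lt ?_
    simp only [f, Polynomial.natDegree_finsetProd_X_sub_C_eq_card, card_range]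
    exact_mod_cast M.lt_succ_self
  have eval_basis (j : ℕ) : (Lagrange.basis (range (M + 1)) (q ^ ·) j).eval x =
      (∏ i ∈ (range (M + 1)).erase j, (x - q ^ i)) /
        ∏ i ∈ (range (M + 1)).erase j, (q ^ j - q ^ i) := by
    simp [Lagrange.basis, Polynomial.eval_prod, Lagrange.basisDivisor, prod_mul_distrib,
      div_eq_inv_mul]
  rw [← eval_f, Lagrange.eq_interpolate hq.injOn degree_f, Lagrange.interpolate_apply,
    Polynomial.eval_finsetSum]
  refine sum_congr rfl fun j hj => ?_
  have coeff := prod_sub_div_prod_erase_sub hq0 one_ne_zero hab j (M - j)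
  rw [Nat.add_sub_cancel' (mem_range_succ_iff.1 hj)] at coeff
  simp only [mul_one, inv_one] at coeff
  rw [Polynomial.eval_mul, Polynomial.eval_C, eval_f, eval_basis, qBinomialCoeff, qBinomialCoeff,
    div_mul_div_comm, ← coeff]
  ring

lemma pow_add_mul_sub_pow (q t : K) (i k : ℕ) :
    q ^ (i + k) * t - q ^ i = -q ^ i * (1 - q ^ k * t) := by
  ring

lemma pow_mul_sub_pow_add (ht : t ≠ 0) (q : K) (i k : ℕ) :
    q ^ i * t - q ^ (i + k) = q ^ i * t * (1 - q ^ k * t⁻¹) := by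
  field_simp
  ring

lemma pow_mul_sub_pow_ne_zero (hq : q ≠ 0) (ht : t ≠ 0) (h1 : ∀ r : ℕ, 1 - q ^ (r + 1) * t ≠ 0)
    (h2 : ∀ r : ℕ, 1 - q ^ (r + 1) * t⁻¹ ≠ 0) {N i : ℕ} (hi : i ≠ N) :
    q ^ N * t - q ^ i ≠ 0 := by
  rcases hi.lt_or_gt with h | h <;> obtain ⟨k, rfl⟩ := Nat.exists_eq_add_of_lt h
  · rw [add_assoc, pow_add_mul_sub_pow]
    exact mul_ne_zero (by simp [hq]) (h1 k)
  · rw [add_assoc, pow_mul_sub_pow_add ht]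
    exact mul_ne_zero (by simp [hq, ht]) (h2 k)

lemma pow_mul_sub_pow_div_of_le (hq : q ≠ 0) (t : K) {N k : ℕ} (hk : k ≤ N) :
    (q ^ N * t - q ^ N) / (q ^ N * t - q ^ (N - k)) = q ^ k * ((1 - t) / (1 - q ^ k * t)) := by
  obtain ⟨i, rfl⟩ := Nat.exists_eq_add_of_le' hk
  have numerator : q ^ (i + k) * t - q ^ (i + k) = -q ^ i * (q ^ k * (1 - t)) := by ring
  rw [Nat.add_sub_cancel, numerator, pow_add_mul_sub_pow, mul_div_mul_left _ _ (by simp [hq]),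
    mul_div_assoc]

lemma pow_mul_sub_pow_div_add (hq : q ≠ 0) (ht : t ≠ 0) (N k : ℕ) :
    (q ^ N * t - q ^ N) / (q ^ N * t - q ^ (N + k)) = (1 - t⁻¹) / (1 - q ^ k * t⁻¹) := by
  have numerator := pow_mul_sub_pow_add ht q N 0
  rw [add_zero, pow_zero, one_mul] at numerator
  rw [numerator, pow_mul_sub_pow_add ht, mul_div_mul_left _ _ (by simp [hq, ht])]

lemma qPochhammer_mul_div_eq_sum (hq : Function.Injective (q ^ · : ℕ → K)) (hab : a * b = q)
    (ht : t ≠ 0) (h1 : ∀ r : ℕ, 1 - q ^ (r + 1) * t ≠ 0)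
    (h2 : ∀ r : ℕ, 1 - q ^ (r + 1) * t⁻¹ ≠ 0) (N : ℕ) :
    qPochhammer (a * t) q N * qPochhammer (b * t⁻¹) q N /
        (qPochhammer (q * t) q N * qPochhammer (q * t⁻¹) q N) =
      qBinomialCoeff a q N * qBinomialCoeff b q N + ∑ k ∈ range N,
        (qBinomialCoeff a q (N - (k + 1)) * qBinomialCoeff b q (N + (k + 1)) *
            ((1 - t) * (a ^ (k + 1) / (1 - q ^ (k + 1) * t))) +
          qBinomialCoeff b q (N - (k + 1)) * qBinomialCoeff a q (N + (k + 1)) *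
            ((1 - t⁻¹) * (b ^ (k + 1) / (1 - q ^ (k + 1) * t⁻¹)))) := by
  have hq0 := ne_zero_of_pow_injective hq
  have hb : b ≠ 0 := right_ne_zero_of_mul (hab.trans_ne hq0)
  have node_ne (i : ℕ) (hi : i ∈ (range (N + N + 1)).erase N) : q ^ N * t - q ^ i ≠ 0 :=
    pow_mul_sub_pow_ne_zero hq0 ht h1 h2 (mem_erase.1 hi).1
  have quotient {j : ℕ} (hj : j < N + N + 1) (hjN : N ≠ j) :=
    prod_erase_div_prod_erase (mem_range.2 (by omega)) (mem_range.2 hj) hjN node_ne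
  refine mul_left_cancel₀ (pow_ne_zero N hb) ?_
  rw [← prod_sub_div_prod_erase_sub hq0 ht hab, prod_range_sub_mul_pow_eq_sum hq hab, sum_div,
    sum_range_add_self_add_one, mul_add, mul_sum]
  congr 1
  · rw [mul_div_assoc, div_self (prod_ne_zero_iff.2 node_ne), mul_one, Nat.add_sub_cancel]
  refine sum_congr rfl fun k hk => ?_
  have hk : k + 1 ≤ N := mem_range.1 hk
  rw [mul_add]
  congr 1
  · have index : N + N - (N - (k + 1)) = N + (k + 1) := by omega
    have power : b ^ N * a ^ (k + 1) = b ^ (N - (k + 1)) * q ^ (k + 1) := by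
      rw [← Nat.sub_add_cancel hk, pow_add, mul_assoc, ← mul_pow, mul_comm b a, hab,
        Nat.add_sub_cancel]
    rw [mul_div_assoc, quotient (by omega) (by omega), index, pow_mul_sub_pow_div_of_le hq0 t hk]
    linear_combination -(qBinomialCoeff a q (N - (k + 1)) * qBinomialCoeff b q (N + (k + 1)) *
      ((1 - t) / (1 - q ^ (k + 1) * t))) * power
  · have index : N + N - (N + (k + 1)) = N - (k + 1) := by omega
    rw [mul_div_assoc, quotient (by omega) (by omega), index, pow_mul_sub_pow_div_add hq0 ht,
      pow_add]
    ring

lemma one_sub_mul_mul_one_sub_mul_inv_div (hab : a * b = 0) (ha : 1 - a ≠ 0) (hb : 1 - b ≠ 0)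
    (ht : t ≠ 0) :
    (1 - a * t) * (1 - b * t⁻¹) / ((1 - a) * (1 - b)) =
      1 + ((1 - t) * (a / (1 - a)) + (1 - t⁻¹) * (b / (1 - b))) := by
  field_simp
  linear_combination -(t - 1) ^ 2 * hab

end FiniteProducts

section Limits

variable {𝕜 : Type*} [NormedField 𝕜] {a b q t : 𝕜}

/-- The infinite `q`-Pochhammer symbol `(a;q)_∞` over a normed field; `qpoch` is the complex
case. -/
noncomputable def qPochhammerInf (a q : 𝕜) : 𝕜 := ∏' r : ℕ, (1 - a * q ^ r)

lemma pow_right_injective_of_norm_lt_one (hq0 : q ≠ 0) (hq : ‖q‖ < 1) :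
    Function.Injective (q ^ · : ℕ → 𝕜) := by
  refine Function.Injective.of_comp (f := norm) ?_
  simpa [Function.comp_def] using (pow_right_strictAnti₀ (norm_pos_iff.2 hq0) hq).injective

lemma one_sub_mul_pow_ne_zero (ha : ‖a‖ < 1) (hq : ‖q‖ ≤ 1) (r : ℕ) : 1 - a * q ^ r ≠ 0 := by
  refine sub_ne_zero.2 fun h => ?_
  have norm_lt_one : ‖a * q ^ r‖ < 1 := by
    rw [norm_mul, norm_pow]
    exact mul_lt_one_of_nonneg_of_lt_one_left (norm_nonneg a) ha (pow_le_one₀ (norm_nonneg q) hq)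
  simp [← h] at norm_lt_one

lemma summable_norm_neg_mul_pow (hq : ‖q‖ < 1) (a : 𝕜) :
    Summable fun r : ℕ => ‖-(a * q ^ r)‖ := by
  simpa using (summable_geometric_of_lt_one (norm_nonneg q) hq).mul_left ‖a‖

lemma qPochhammerInf_zero_right (a : 𝕜) : qPochhammerInf a 0 = 1 - a := by
  rw [qPochhammerInf, tprod_eq_mulSingle 0 fun r hr => by simp [hr]]
  simp

lemma summable_norm_mul_pow_succ_div (ha : ‖a‖ < 1) (hq : ‖q‖ < 1) (c t : 𝕜) :
    Summable fun k : ℕ => ‖c * (a ^ (k + 1) / (1 - q ^ (k + 1) * t))‖ := by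
  have geometric : Summable fun k : ℕ => ‖‖c * a ^ (k + 1)‖‖ := by
    simpa [pow_succ', mul_assoc] using
      (summable_geometric_of_lt_one (norm_nonneg a) ha).mul_left (‖c‖ * ‖a‖)
  have pow_tendsto : Tendsto (fun k : ℕ => q ^ (k + 1)) atTop (𝓝 0) :=
    (tendsto_pow_atTop_nhds_zero_of_norm_lt_one hq).comp (tendsto_add_atTop_nat 1)
  have denominator : Tendsto (fun k : ℕ => ‖(1 - q ^ (k + 1) * t)⁻¹‖) cofinite (𝓝 1) := by
    rw [Nat.cofinite_eq_atTop]
    simpa using (((pow_tendsto.mul_const t).const_sub 1).inv₀ (by simp)).norm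
  simpa [div_eq_mul_inv, mul_assoc] using geometric.mul_tendsto_const denominator

lemma tsum_pow_succ (ha : ‖a‖ < 1) : ∑' r : ℕ, a ^ (r + 1) = a / (1 - a) := by
  simp only [pow_succ', tsum_mul_left, tsum_geometric_of_norm_lt_one ha, div_eq_mul_inv]

variable [CompleteSpace 𝕜]

lemma tendsto_qPochhammer (hq : ‖q‖ < 1) (a : 𝕜) :
    Tendsto (qPochhammer a q) atTop (𝓝 (qPochhammerInf a q)) := by
  have partial_prod_tendsto :=
    (multipliable_one_add_of_summable (summable_norm_neg_mul_pow hq a)).tendsto_prod_tprod_nat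
  simp only [← sub_eq_add_neg] at partial_prod_tendsto
  exact partial_prod_tendsto

lemma qPochhammerInf_ne_zero (hq : ‖q‖ < 1) (h : ∀ r : ℕ, 1 - a * q ^ r ≠ 0) :
    qPochhammerInf a q ≠ 0 := by
  simp only [sub_eq_add_neg] at h
  simpa only [← sub_eq_add_neg, qPochhammerInf] using
    tprod_one_add_ne_zero_of_summable h (summable_norm_neg_mul_pow hq a)

lemma qPochhammerInf_ne_zero_of_norm_lt_one (hq : ‖q‖ < 1) (ha : ‖a‖ < 1) :
    qPochhammerInf a q ≠ 0 :=
  qPochhammerInf_ne_zero hq (one_sub_mul_pow_ne_zero ha hq.le)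

lemma tendsto_qBinomialCoeff (hq : ‖q‖ < 1) (a : 𝕜) :
    Tendsto (qBinomialCoeff a q) atTop (𝓝 (qPochhammerInf a q / qPochhammerInf q q)) :=
  (tendsto_qPochhammer hq a).div (tendsto_qPochhammer hq q) <|
    qPochhammerInf_ne_zero_of_norm_lt_one hq hq

lemma tendsto_sum_range_mul_symm {α β c : ℕ → 𝕜} {A B : 𝕜} (hα : Tendsto α atTop (𝓝 A))
    (hβ : Tendsto β atTop (𝓝 B)) (hc : Summable fun k => ‖c k‖) :
    Tendsto (fun N => ∑ k ∈ range N, α (N - (k + 1)) * β (N + (k + 1)) * c k) atTop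
      (𝓝 (A * B * ∑' k, c k)) := by
  obtain ⟨C, hC⟩ := (Metric.isBounded_range_of_tendsto α hα).exists_norm_le
  obtain ⟨D, hD⟩ := (Metric.isBounded_range_of_tendsto β hβ).exists_norm_le
  rw [Set.forall_mem_range] at hC hD
  have hC0 : 0 ≤ C := (norm_nonneg _).trans (hC 0)
  have term_le (N k : ℕ) : ‖α (N - (k + 1)) * β (N + (k + 1)) * c k‖ ≤ C * D * ‖c k‖ := by
    rw [norm_mul, norm_mul]
    gcongr
    exacts [hC _, hD _]
  have tannery := tendsto_tsum_of_dominated_convergence (𝓕 := atTop)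
    (f := fun N => (range N : Set ℕ).indicator fun k => α (N - (k + 1)) * β (N + (k + 1)) * c k)
    (g := fun k => A * B * c k) (hc.mul_left (C * D)) (fun k => ?_)
    (Eventually.of_forall fun N k => (norm_indicator_le_norm_self _ _).trans (term_le N k))
  · rw [← tsum_mul_left]
    refine tannery.congr fun N => ?_
    rw [← sum_eq_tsum_indicator]
  · have term_tendsto := ((hα.comp (tendsto_sub_atTop_nat (k + 1))).mul
      (hβ.comp (tendsto_add_atTop_nat (k + 1)))).mul_const (c k)
    refine term_tendsto.congr' ?_
    filter_upwards [eventually_gt_atTop k] with N hN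
    simp [hN]

/-- This is Kronecker's case `₁ψ₁(t; qt; q, a)` of Ramanujan's sum: the second family of terms is
`(1 - t) a^n / (1 - q^n t)` at `n = -(r + 1)`, rewritten with `b = q / a`. -/
theorem fermionic_q_identity_half_general (hab : a * b = q) (ha : ‖a‖ < 1) (hb : ‖b‖ < 1)
    (ht : t ≠ 0) (h1 : ∀ r : ℕ, 1 - q ^ (r + 1) * t ≠ 0)
    (h2 : ∀ r : ℕ, 1 - q ^ (r + 1) * t⁻¹ ≠ 0) :
    qPochhammerInf (a * t) q * qPochhammerInf (b * t⁻¹) q * qPochhammerInf q q ^ 2 /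
        (qPochhammerInf (q * t) q * qPochhammerInf (q * t⁻¹) q *
          (qPochhammerInf a q * qPochhammerInf b q)) =
      1 + ∑' r : ℕ, ((1 - t) * (a ^ (r + 1) / (1 - q ^ (r + 1) * t)) +
        (1 - t⁻¹) * (b ^ (r + 1) / (1 - q ^ (r + 1) * t⁻¹))) := by
  have hq : ‖q‖ < 1 := by
    rw [← hab, norm_mul]
    exact mul_lt_one_of_nonneg_of_lt_one_left (norm_nonneg a) ha hb.le
  have hca := summable_norm_mul_pow_succ_div ha hq (1 - t) t
  have hcb := summable_norm_mul_pow_succ_div hb hq (1 - t⁻¹) t⁻¹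
  rw [hca.of_norm.tsum_add hcb.of_norm]
  rcases eq_or_ne q 0 with rfl | hq0
  · -- The interpolation nodes `q ^ i` collide when `q = 0`.
    have ha1 : 1 - a ≠ 0 := by simpa using one_sub_mul_pow_ne_zero ha hq.le 0
    have hb1 : 1 - b ≠ 0 := by simpa using one_sub_mul_pow_ne_zero hb hq.le 0
    simpa [qPochhammerInf_zero_right, tsum_mul_left, tsum_pow_succ, ha, hb] using
      one_sub_mul_mul_one_sub_mul_inv_div hab ha1 hb1 ht
  have ne_zero {x : 𝕜} (hx : ∀ r : ℕ, 1 - q ^ (r + 1) * x ≠ 0) : qPochhammerInf (q * x) q ≠ 0 :=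
    qPochhammerInf_ne_zero hq fun r => by simpa [pow_succ', mul_right_comm] using hx r
  have product_tendsto := ((tendsto_qPochhammer hq (a * t)).mul
    (tendsto_qPochhammer hq (b * t⁻¹))).div ((tendsto_qPochhammer hq (q * t)).mul
      (tendsto_qPochhammer hq (q * t⁻¹))) (mul_ne_zero (ne_zero h1) (ne_zero h2))
  have hα := tendsto_qBinomialCoeff hq a
  have hβ := tendsto_qBinomialCoeff hq b
  have sum_tendsto := (hα.mul hβ).add
    ((tendsto_sum_range_mul_symm hα hβ hca).add (tendsto_sum_range_mul_symm hβ hα hcb))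
  have limit_eq := tendsto_nhds_unique (product_tendsto.congr fun N => ?_) sum_tendsto
  · rw [mul_div_mul_comm, limit_eq]
    have hA := qPochhammerInf_ne_zero_of_norm_lt_one hq ha
    have hB := qPochhammerInf_ne_zero_of_norm_lt_one hq hb
    have hQ := qPochhammerInf_ne_zero_of_norm_lt_one hq hq
    field_simp
  · exact (qPochhammer_mul_div_eq_sum (pow_right_injective_of_norm_lt_one hq0 hq) hab ht h1 h2
      N).trans (by rw [sum_add_distrib])

end Limits

lemma qpoch_eq_qPochhammerInf (a q : ℂ) : qpoch a q = qPochhammerInf a q := rfl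

lemma sub_inv_mul_summand_eq {K : Type*} [Field K] {s u : K} (hu : u ≠ 0) (d e : K) (r : ℕ) :
    (u - u⁻¹) * ((-1) ^ r * s ^ (r + 1) * u / d - (-1) ^ r * s ^ (r + 1) * u⁻¹ / e) =
      (1 - u ^ 2) * ((-s) ^ (r + 1) / d) + (1 - (u ^ 2)⁻¹) * ((-s) ^ (r + 1) / e) := by
  rw [neg_pow s, pow_succ (-1)]
  simp only [div_eq_mul_inv]
  field_simp
  ring

/-- the fermionic-type `q`-identity
`(-q^{1/2}t;q)_∞ (-q^{1/2}t^{-1};q)_∞ (q;q)_∞² /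
  ((qt;q)_∞ (qt^{-1};q)_∞ (-q^{1/2};q)_∞²)
 = 1 + (t^{1/2}-t^{-1/2}) ∑_{r≥0} (-1)^r [ (q^{r+1}t)^{1/2}/(1-q^{r+1}t)
     - (q^{r+1}t^{-1})^{1/2}/(1-q^{r+1}t^{-1}) ]`,
stated in the variables `s = q^{1/2}` and `u = t^{1/2}` (so `q = s²`,
`t = u²`), for `t` off the singular set. -/
theorem fermionic_q_identity_half (s u : ℂ) (hs : ‖s‖ < 1) (hu : u ≠ 0)
    (h1 : ∀ r : ℕ, 1 - (s ^ 2) ^ (r + 1) * u ^ 2 ≠ 0)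
    (h2 : ∀ r : ℕ, 1 - (s ^ 2) ^ (r + 1) * (u ^ 2)⁻¹ ≠ 0) :
    qpoch (-(s * u ^ 2)) (s ^ 2) * qpoch (-(s * (u ^ 2)⁻¹)) (s ^ 2) *
        (qpoch (s ^ 2) (s ^ 2)) ^ 2 /
      (qpoch (s ^ 2 * u ^ 2) (s ^ 2) * qpoch (s ^ 2 * (u ^ 2)⁻¹) (s ^ 2) *
        (qpoch (-s) (s ^ 2)) ^ 2)
    = 1 + (u - u⁻¹) *
        ∑' r : ℕ,
          ((-1 : ℂ) ^ r * s ^ (r + 1) * u / (1 - (s ^ 2) ^ (r + 1) * u ^ 2)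
            - (-1 : ℂ) ^ r * s ^ (r + 1) * u⁻¹ / (1 - (s ^ 2) ^ (r + 1) * (u ^ 2)⁻¹)) := by
  simp only [← tsum_mul_left, sub_inv_mul_summand_eq hu]
  simpa only [qpoch_eq_qPochhammerInf, mul_neg, neg_mul, sq] using
    fermionic_q_identity_half_general (a := -s) (b := -s) (q := s ^ 2) (by ring) (by simpa)
      (by simpa) (pow_ne_zero 2 hu) h1 h2
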